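/- Let μ be a finite-variation signed charge on a semi-ring 𝒮. Then there exist unique finite charges μ⁺ and μ⁻ on 𝒮 such that μ = μ⁺ - μ⁻ and μ⁺ ∧ μ⁻ = 0; they are given by μ⁺ = μ ∨ 0 and μ⁻ = (-μ) ∨ 0 (partition suprema), and moreover |μ| = μ⁺ + μ⁻. If μ is additionally countably additive, then μ⁺ and μ⁻ are measures. (Jordan decomposition on semi-rings.) -/

import Mathlib

/-!
Write `f = max μ 0` and let `p A` be the supremum of `Σ_{C ∈ Π} f C` over the finite partitions
`Π` of `A`, which is finite because it is at most `|μ| A`.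

Everything except additivity of `p` comes from one remark: the partition sums of a charge `ν` are
constantly `ν A`, so the partition sums of `a f + ν` are affine in those of `f`. Since
`max (-μ) 0 = f - μ` and `|μ| = 2 f - μ`, the suprema defining `μ⁻` and `|μ|` are
`q = p - μ` and `2 p - μ = p + q` (`iSup_partition_eq`). Similarly, whenever `μ = p' - q'` with
charges `p', q'`, one has `min p' q' = p' - f`, so `p' ∧ q' = p' - p` (`iInf_partition_eq`). This
gives both `p ∧ q = 0` and uniqueness.

Additivity of `p` (`isRealCharge_posPart`): intersecting a partition of `⋃ A i` with the `A i` can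
only increase its sum, since `f` is subadditive, and this gives `≤`; gluing near-optimal partitions
of the `A i` gives `≥`. The countable version (`countablyAdditive_posPart`) uses the same
refinement for `≤`, and for `≥` the fact that a nonnegative charge on a semi-ring is superadditive
over disjoint subsets (`IsRealCharge.sum_le`).
-/

open MeasureTheory Set
open scoped ENNReal NNReal BigOperators

namespace SignedCharges

variable {Ω : Type*}

/-- `P` is a finite partition of `A` by elements of the family `S`. -/
def IsPartition (S : Set (Set Ω)) (A : Set Ω) (P : Finset (Set Ω)) : Prop :=
  ↑P ⊆ S ∧ (P : Set (Set Ω)).PairwiseDisjoint id ∧ ⋃₀ ↑P = A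

/-- The partition-supremum `μ_F` of a family `F = (ν j)` of `EReal`-valued set functions:
`μ_F(A) = sup` over finite partitions `Π` of `A` by elements of `S` of `Σ_{C ∈ Π} sup_j ν j C`. -/
noncomputable def supFun {J : Type*} (S : Set (Set Ω)) (ν : J → Set Ω → EReal)
    (A : Set Ω) : EReal :=
  ⨆ P : Finset (Set Ω), ⨆ _ : IsPartition S A P, ∑ C ∈ P, ⨆ j, ν j C

/-- The admissibility hypothesis: `sup_j ν j A > -∞` for every `A ∈ S`. -/
def Admissible {J : Type*} (S : Set (Set Ω)) (ν : J → Set Ω → EReal) : Prop :=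
  ∀ A ∈ S, ⊥ < ⨆ j, ν j A

/-- An `EReal`-valued signed charge on `S`: vanishes on `∅`, finitely additive on finite
disjoint unions within `S`, and omits at least one of the values `+∞`, `-∞` on `S`. -/
structure IsCharge (S : Set (Set Ω)) (μ : Set Ω → EReal) : Prop where
  empty : μ ∅ = 0
  additive : ∀ (n : ℕ) (A : Fin n → Set Ω), (∀ i, A i ∈ S) →
    Pairwise (Function.onFun Disjoint A) → (⋃ i, A i) ∈ S → μ (⋃ i, A i) = ∑ i, μ (A i)
  omits : (∀ A ∈ S, μ A ≠ ⊤) ∨ (∀ A ∈ S, μ A ≠ ⊥)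

/-- A finite (real-valued) signed charge on `S`. -/
structure IsRealCharge (S : Set (Set Ω)) (μ : Set Ω → ℝ) : Prop where
  empty : μ ∅ = 0
  additive : ∀ (n : ℕ) (A : Fin n → Set Ω), (∀ i, A i ∈ S) →
    Pairwise (Function.onFun Disjoint A) → (⋃ i, A i) ∈ S → μ (⋃ i, A i) = ∑ i, μ (A i)

/-- Countable additivity for a real-valued set function (unconditional convergence). -/
def CountablyAdditiveR (S : Set (Set Ω)) (μ : Set Ω → ℝ) : Prop :=
  ∀ A : ℕ → Set Ω, (∀ n, A n ∈ S) → Pairwise (Function.onFun Disjoint A) →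
    (⋃ n, A n) ∈ S → HasSum (fun n => μ (A n)) (μ (⋃ n, A n))

/-- Countable sub-additivity for an `EReal`-valued set function. -/
def CountablySubadditiveE (S : Set (Set Ω)) (μ : Set Ω → EReal) : Prop :=
  ∀ A : ℕ → Set Ω, (∀ n, A n ∈ S) → Pairwise (Function.onFun Disjoint A) →
    (⋃ n, A n) ∈ S → μ (⋃ n, A n) ≤ ∑' n, μ (A n)

/-- Countable additivity for an `EReal`-valued set function. -/
def CountablyAdditiveE (S : Set (Set Ω)) (μ : Set Ω → EReal) : Prop :=
  ∀ A : ℕ → Set Ω, (∀ n, A n ∈ S) → Pairwise (Function.onFun Disjoint A) →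
    (⋃ n, A n) ∈ S → μ (⋃ n, A n) = ∑' n, μ (A n)

/-- `μ⁺ = μ ∨ 0` : sup over finite partitions of `Σ_{C} max (μ C) 0`. -/
noncomputable def pos (S : Set (Set Ω)) (μ : Set Ω → EReal) (A : Set Ω) : EReal :=
  ⨆ P : Finset (Set Ω), ⨆ _ : IsPartition S A P, ∑ C ∈ P, max (μ C) 0

/-- `μ⁻ = (-μ) ∨ 0` : sup over finite partitions of `Σ_{C} max (-μ C) 0`. -/
noncomputable def neg (S : Set (Set Ω)) (μ : Set Ω → EReal) (A : Set Ω) : EReal :=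
  ⨆ P : Finset (Set Ω), ⨆ _ : IsPartition S A P, ∑ C ∈ P, max (-μ C) 0

/-- The variation `|μ|` : sup over finite partitions of `Σ_{C} |μ C|`. -/
noncomputable def var (S : Set (Set Ω)) (μ : Set Ω → EReal) (A : Set Ω) : EReal :=
  ⨆ P : Finset (Set Ω), ⨆ _ : IsPartition S A P, ∑ C ∈ P, max (μ C) (-μ C)

/-- The infimum `α ∧ β` of two nonnegative charges:
inf over finite partitions of `Σ_{C} min (α C) (β C)`. -/
noncomputable def infC (S : Set (Set Ω)) (α β : Set Ω → EReal) (A : Set Ω) : EReal :=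
  ⨅ P : Finset (Set Ω), ⨅ _ : IsPartition S A P, ∑ C ∈ P, min (α C) (β C)

/-- The ring generated by a semi-ring: finite unions of elements of `S`. -/
def genRing (S : Set (Set Ω)) : Set (Set Ω) :=
  {A | ∃ P : Finset (Set Ω), ↑P ⊆ S ∧ A = ⋃₀ ↑P}

/-- Coercion of a real-valued set function to an `EReal`-valued one. -/
def toE (μ : Set Ω → ℝ) : Set Ω → EReal := fun A => (μ A : EReal)

/-- `μ` has finite variation on `S`. -/
def FiniteVar (S : Set (Set Ω)) (μ : Set Ω → ℝ) : Prop :=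
  ∀ A ∈ S, var S (toE μ) A ≠ ⊤

/-! ### Additivity over indexed families and partitions -/

/-- Finite additivity for families indexed by an arbitrary finset instead of `Fin n`. -/
lemma IsRealCharge.sum_biUnion {S : Set (Set Ω)} {ν : Set Ω → ℝ} (hν : IsRealCharge S ν)
    {ι : Type*} (s : Finset ι) (A : ι → Set Ω) (hA : ∀ i ∈ s, A i ∈ S)
    (hd : (s : Set ι).PairwiseDisjoint A) (hU : (⋃ i ∈ s, A i) ∈ S) :
    ν (⋃ i ∈ s, A i) = ∑ i ∈ s, ν (A i) := by
  have hEq : (⋃ k : Fin s.card, A (s.equivFin.symm k)) = ⋃ i ∈ s, A i := by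
    ext x
    simp only [mem_iUnion]
    constructor
    · rintro ⟨k, hk⟩
      exact ⟨_, (s.equivFin.symm k).2, hk⟩
    · rintro ⟨i, hi, hx⟩
      exact ⟨s.equivFin ⟨i, hi⟩, by simpa using hx⟩
  have h := hν.additive s.card (fun k => A (s.equivFin.symm k))
    (fun k => hA _ (s.equivFin.symm k).2)
    (fun k l hkl => hd (s.equivFin.symm k).2 (s.equivFin.symm l).2
      (fun h => hkl (s.equivFin.symm.injective (Subtype.ext h))))
    (by rw [hEq]; exact hU)
  rw [hEq] at h
  rw [h, s.equivFin.symm.sum_comp (fun i : s => ν (A i)), Finset.sum_coe_sort s (fun i => ν (A i))]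

lemma IsRealCharge.sum_partition {S : Set (Set Ω)} {ν : Set Ω → ℝ} (hν : IsRealCharge S ν)
    {A : Set Ω} (hA : A ∈ S) {P : Finset (Set Ω)} (hP : IsPartition S A P) :
    ∑ C ∈ P, ν C = ν A := by
  obtain ⟨h1, h2, h3⟩ := hP
  have hU : (⋃ C ∈ P, C) = A := by rw [← h3, sUnion_eq_biUnion]; rfl
  have := hν.sum_biUnion P id (fun i hi => h1 hi) h2 (by simpa [hU] using hA)
  simpa [hU] using this.symm

lemma IsRealCharge.sum_inter {S : Set (Set Ω)} (hS : IsSetSemiring S) {ν : Set Ω → ℝ}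
    (hν : IsRealCharge S ν) {ι : Type*} (s : Finset ι) (A : ι → Set Ω) (hA : ∀ i ∈ s, A i ∈ S)
    (hd : (s : Set ι).PairwiseDisjoint A) {B : Set Ω} (hB : B ∈ S) (hBA : B ⊆ ⋃ i ∈ s, A i) :
    ∑ i ∈ s, ν (B ∩ A i) = ν B := by
  have hU : (⋃ i ∈ s, B ∩ A i) = B := by
    rw [← inter_iUnion₂]; exact inter_eq_left.2 hBA
  have := hν.sum_biUnion s (fun i => B ∩ A i) (fun i hi => hS.inter_mem _ hB _ (hA i hi))
    (fun i hi j hj hij => (hd hi hj hij).mono inter_subset_right inter_subset_right)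
    (by rw [hU]; exact hB)
  rw [hU] at this
  exact this.symm

lemma isPartition_singleton {S : Set (Set Ω)} {A : Set Ω} (hA : A ∈ S) :
    IsPartition S A {A} := by
  refine ⟨by simpa using hA, by simp, by simp⟩

open Classical in
/-- The members of a disjoint indexed family form a partition of its union; distinct indices can
only give the same member when that member is empty. -/
lemma isPartition_image {S : Set (Set Ω)} {κ : Type*} (K : Finset κ) (D : κ → Set Ω)
    (hD : ∀ k ∈ K, D k ∈ S) (hd : (K : Set κ).PairwiseDisjoint D) {B : Set Ω}
    (hU : (⋃ k ∈ K, D k) = B) : IsPartition S B (K.image D) := by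
  refine ⟨?_, ?_, ?_⟩
  · intro C hC
    obtain ⟨k, hk, rfl⟩ := Finset.mem_image.1 (Finset.mem_coe.1 hC)
    exact hD k hk
  · intro C hC C' hC' hne
    obtain ⟨k, hk, rfl⟩ := Finset.mem_image.1 (Finset.mem_coe.1 hC)
    obtain ⟨l, hl, rfl⟩ := Finset.mem_image.1 (Finset.mem_coe.1 hC')
    exact hd hk hl (fun h => hne (by rw [h]))
  · rw [← hU, Finset.coe_image, sUnion_image]; rfl

/-- A nonnegative charge on a semi-ring is superadditive on disjoint subfamilies: the part of `B`
not covered by the `A i` splits into finitely many members of the semi-ring. -/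
lemma IsRealCharge.sum_le {S : Set (Set Ω)} (hS : IsSetSemiring S) {ν : Set Ω → ℝ}
    (hν : IsRealCharge S ν) (h0 : ∀ A ∈ S, 0 ≤ ν A) {ι : Type*} (s : Finset ι) (A : ι → Set Ω)
    (hA : ∀ i ∈ s, A i ∈ S) (hd : (s : Set ι).PairwiseDisjoint A) {B : Set Ω} (hB : B ∈ S)
    (hAB : ∀ i ∈ s, A i ⊆ B) : ∑ i ∈ s, ν (A i) ≤ ν B := by
  classical
  obtain ⟨J, hJS, hJd, hJU⟩ := hS.exists_disjoint_finset_sdiff_eq (I := s.image A) hB (by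
    intro C hC
    obtain ⟨k, hk, rfl⟩ := Finset.mem_image.1 (Finset.mem_coe.1 hC)
    exact hA k hk)
  have hUs : ⋃₀ (↑(s.image A) : Set (Set Ω)) = ⋃ i ∈ s, A i := by
    rw [Finset.coe_image, sUnion_image]; rfl
  rw [hUs] at hJU
  have hdis : ∀ i ∈ s, ∀ C ∈ J, Disjoint (A i) C := by
    intro i hi C hC
    have hCsub : C ⊆ B \ ⋃ i ∈ s, A i := by rw [hJU]; exact subset_sUnion_of_mem hC
    exact (disjoint_sdiff_right (s := ⋃ i ∈ s, A i) (t := B)).mono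
      (subset_biUnion_of_mem (u := A) (s := (s : Set ι)) hi) hCsub
  let D : ι ⊕ Set Ω → Set Ω := Sum.elim A id
  have hDU : (⋃ k ∈ s.disjSum J, D k) = B := by
    have h1 : (⋃ k ∈ s.disjSum J, D k) = (⋃ i ∈ s, A i) ∪ ⋃₀ (J : Set (Set Ω)) := by
      ext x; simp [D, Finset.mem_disjSum]
    rw [h1, ← hJU, union_sdiff_self]
    exact union_eq_right.2 (iUnion₂_subset hAB)
  have h := hν.sum_biUnion (s.disjSum J) D
    (by
      rintro (i | C) hk
      · exact hA i (by simpa using hk)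
      · exact hJS (Finset.inr_mem_disjSum.1 hk))
    (by
      rintro (i | C) hk (j | C') hl hne
      · exact hd (by simpa using hk) (by simpa using hl) (by simpa using hne)
      · exact hdis i (by simpa using hk) C' (by simpa using hl)
      · exact (hdis j (by simpa using hl) C (by simpa using hk)).symm
      · exact hJd (by simpa using hk) (by simpa using hl) (by simpa using hne))
    (by rw [hDU]; exact hB)
  rw [hDU, Finset.sum_disjSum] at h
  have : 0 ≤ ∑ C ∈ J, ν C := Finset.sum_nonneg fun C hC => h0 C (hJS hC)
  rw [h]
  simpa [D] using this

/-! ### Partition suprema in the extended reals -/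

lemma coe_sum (P : Finset (Set Ω)) (f : Set Ω → ℝ) :
    ((∑ C ∈ P, f C : ℝ) : EReal) = ∑ C ∈ P, (f C : EReal) := by
  classical
  induction P using Finset.induction_on with
  | empty => simp
  | insert a s ha ih => rw [Finset.sum_insert ha, Finset.sum_insert ha, EReal.coe_add, ih]

/-- The real sums `Σ_{C ∈ Π} max (μ C) 0` over the finite partitions `Π` of `A`. -/
def posSums (S : Set (Set Ω)) (μ : Set Ω → ℝ) (A : Set Ω) : Set ℝ :=
  {x | ∃ P, IsPartition S A P ∧ x = ∑ C ∈ P, max (μ C) 0}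

/-- The positive part of `μ` as a real number; a junk value where the partition sums are
unbounded or where `A` has no partition. -/
noncomputable def posPart (S : Set (Set Ω)) (μ : Set Ω → ℝ) (A : Set Ω) : ℝ :=
  sSup (posSums S μ A)

lemma isLUB_posPart {S : Set (Set Ω)} {μ : Set Ω → ℝ} (hv : FiniteVar S μ) {A : Set Ω}
    (hA : A ∈ S) : IsLUB (posSums S μ A) (posPart S μ A) := by
  refine isLUB_csSup ⟨_, {A}, isPartition_singleton hA, rfl⟩ ?_
  have hle : ∀ P, IsPartition S A P →
      ((∑ C ∈ P, |μ C| : ℝ) : EReal) ≤ var S (toE μ) A := by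
    intro P hP
    rw [coe_sum]
    refine le_trans (le_of_eq ?_) (le_iSup₂_of_le P hP le_rfl)
    refine Finset.sum_congr rfl fun C _ => ?_
    rw [abs, EReal.coe_strictMono.monotone.map_max, EReal.coe_neg]; rfl
  have hbot : var S (toE μ) A ≠ ⊥ := by
    intro h
    have := hle _ (isPartition_singleton hA)
    rw [h] at this
    exact EReal.coe_ne_bot _ (le_bot_iff.1 this)
  refine ⟨(var S (toE μ) A).toReal, ?_⟩
  rintro x ⟨P, hP, rfl⟩
  have h1 : (∑ C ∈ P, |μ C|) ≤ (var S (toE μ) A).toReal := by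
    rw [← EReal.coe_le_coe_iff, EReal.coe_toReal (hv A hA) hbot]
    exact hle P hP
  refine le_trans (Finset.sum_le_sum fun C _ => ?_) h1
  exact max_le (le_abs_self _) (abs_nonneg _)

/-- Partition sums of `a • max μ 0 + ν`, with `ν` a charge and `a > 0`, are affine functions of
the partition sums of `max μ 0`, and so is their supremum. -/
lemma iSup_partition_eq {S : Set (Set Ω)} {μ ν : Set Ω → ℝ} (hv : FiniteVar S μ)
    (hν : IsRealCharge S ν) {a : ℝ} (ha : 0 < a) {G : Set Ω → EReal}
    (hG : ∀ C, G C = ((a * max (μ C) 0 + ν C : ℝ) : EReal)) {A : Set Ω} (hA : A ∈ S) :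
    (⨆ P : Finset (Set Ω), ⨆ _ : IsPartition S A P, ∑ C ∈ P, G C)
      = ((a * posPart S μ A + ν A : ℝ) : EReal) := by
  have hlub := isLUB_posPart hv hA
  have hs : ∀ P, IsPartition S A P →
      ∑ C ∈ P, G C = ((a * ∑ C ∈ P, max (μ C) 0 + ν A : ℝ) : EReal) := by
    intro P hP
    rw [Finset.sum_congr rfl fun C _ => hG C, ← coe_sum, Finset.sum_add_distrib,
      ← Finset.mul_sum, hν.sum_partition hA hP]
  apply le_antisymm
  · refine iSup₂_le fun P hP => ?_
    rw [hs P hP, EReal.coe_le_coe_iff]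
    have := hlub.1 ⟨P, hP, rfl⟩
    gcongr
  -- It suffices to compare with the real upper bounds `z` of the extended-real supremum.
  · refine EReal.le_of_forall_lt_iff_le.1 fun z hz => ?_
    have hub : posPart S μ A ≤ (z - ν A) / a := by
      refine hlub.2 ?_
      rintro x ⟨P, hP, rfl⟩
      have h1 := (le_iSup₂_of_le (f := fun P (_ : IsPartition S A P) => ∑ C ∈ P, G C)
        P hP le_rfl).trans hz.le
      rw [hs P hP, EReal.coe_le_coe_iff] at h1
      rw [le_div_iff₀ ha]
      linarith
    rw [le_div_iff₀ ha] at hub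
    rw [EReal.coe_le_coe_iff]
    linarith

lemma iInf_partition_eq {S : Set (Set Ω)} {μ ν : Set Ω → ℝ} (hv : FiniteVar S μ)
    (hν : IsRealCharge S ν) {G : Set Ω → EReal}
    (hG : ∀ C ∈ S, G C = ((ν C - max (μ C) 0 : ℝ) : EReal)) {A : Set Ω} (hA : A ∈ S) :
    (⨅ P : Finset (Set Ω), ⨅ _ : IsPartition S A P, ∑ C ∈ P, G C)
      = ((ν A - posPart S μ A : ℝ) : EReal) := by
  have hlub := isLUB_posPart hv hA
  have hs : ∀ P, IsPartition S A P →
      ∑ C ∈ P, G C = ((ν A - ∑ C ∈ P, max (μ C) 0 : ℝ) : EReal) := by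
    intro P hP
    rw [Finset.sum_congr rfl fun C hC => hG C (hP.1 hC), ← coe_sum, Finset.sum_sub_distrib,
      hν.sum_partition hA hP]
  apply le_antisymm
  · refine EReal.ge_of_forall_gt_iff_ge.1 fun z hz => ?_
    have hub : posPart S μ A ≤ ν A - z := by
      refine hlub.2 ?_
      rintro x ⟨P, hP, rfl⟩
      have h1 := hz.le.trans (iInf₂_le_of_le
        (f := fun P (_ : IsPartition S A P) => ∑ C ∈ P, G C) P hP le_rfl)
      rw [hs P hP, EReal.coe_le_coe_iff] at h1
      linarith
    rw [EReal.coe_le_coe_iff]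
    linarith
  · refine le_iInf₂ fun P hP => ?_
    rw [hs P hP, EReal.coe_le_coe_iff]
    have := hlub.1 ⟨P, hP, rfl⟩
    linarith

/-! ### The positive part is a charge -/

lemma max_sum_le {ι : Type*} (s : Finset ι) (x : ι → ℝ) :
    max (∑ i ∈ s, x i) 0 ≤ ∑ i ∈ s, max (x i) 0 :=
  max_le (Finset.sum_le_sum fun _ _ => le_max_left _ _)
    (Finset.sum_nonneg fun _ _ => le_max_right _ _)

lemma le_posPart {S : Set (Set Ω)} {μ : Set Ω → ℝ} (hv : FiniteVar S μ) {A : Set Ω}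
    (hA : A ∈ S) : max (μ A) 0 ≤ posPart S μ A :=
  (isLUB_posPart hv hA).1 ⟨{A}, isPartition_singleton hA, by simp⟩

lemma sum_le_posPart {S : Set (Set Ω)} {μ : Set Ω → ℝ} (hμ : IsRealCharge S μ)
    (hv : FiniteVar S μ) {κ : Type*} (K : Finset κ) (D : κ → Set Ω)
    (hD : ∀ k ∈ K, D k ∈ S) (hd : (K : Set κ).PairwiseDisjoint D) {B : Set Ω} (hB : B ∈ S)
    (hU : (⋃ k ∈ K, D k) = B) : ∑ k ∈ K, max (μ (D k)) 0 ≤ posPart S μ B := by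
  classical
  refine (isLUB_posPart hv hB).1 ⟨_, isPartition_image K D hD hd hU, ?_⟩
  rw [Finset.sum_image_of_disjoint (g := fun C => max (μ C) 0) (by simp [hμ.empty]) hd]

lemma isRealCharge_posPart {S : Set (Set Ω)} (hS : IsSetSemiring S) {μ : Set Ω → ℝ}
    (hμ : IsRealCharge S μ) (hv : FiniteVar S μ) : IsRealCharge S (posPart S μ) := by
  have hadd : ∀ (n : ℕ) (A : Fin n → Set Ω), (∀ i, A i ∈ S) →
      Pairwise (Function.onFun Disjoint A) → (⋃ i, A i) ∈ S →
      posPart S μ (⋃ i, A i) = ∑ i, posPart S μ (A i) := by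
    intro n A hA hd hU
    apply le_antisymm
    · refine (isLUB_posPart hv hU).2 ?_
      rintro x ⟨P, hP, rfl⟩
      have h1 : ∀ C ∈ P, max (μ C) 0 ≤ ∑ i, max (μ (C ∩ A i)) 0 := by
        intro C hC
        rw [← hμ.sum_inter hS Finset.univ A (fun i _ => hA i)
          (fun i _ j _ hij => hd hij) (hP.1 hC)
          (by simpa [hP.2.2] using subset_sUnion_of_mem (S := (P : Set (Set Ω))) hC)]
        exact max_sum_le _ _
      refine (Finset.sum_le_sum h1).trans ?_
      rw [Finset.sum_comm]
      refine Finset.sum_le_sum fun i _ => ?_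
      refine sum_le_posPart hμ hv P (fun C => C ∩ A i)
        (fun C hC => hS.inter_mem _ (hP.1 hC) _ (hA i))
        (fun C hC C' hC' hne => (hP.2.1 hC hC' hne).mono inter_subset_left inter_subset_left)
        (hA i) ?_
      rw [← iUnion₂_inter]
      refine inter_eq_right.2 ?_
      have : (⋃ C ∈ P, C) = ⋃ i, A i := by rw [← hP.2.2, sUnion_eq_biUnion]; rfl
      rw [this]; exact subset_iUnion A i
    -- Near-optimal partitions of the `A i` together form a partition of the union.
    · refine le_of_forall_pos_le_add fun ε hε => ?_
      have hδ : 0 < ε / (n + 1) := by positivity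
      have hex : ∀ i, ∃ P, IsPartition S (A i) P ∧
          posPart S μ (A i) - ε / (n + 1) < ∑ C ∈ P, max (μ C) 0 := by
        intro i
        obtain ⟨x, ⟨P, hP, rfl⟩, hx⟩ := (lt_isLUB_iff (isLUB_posPart hv (hA i))).1
          (sub_lt_self (posPart S μ (A i)) hδ)
        exact ⟨P, hP, hx⟩
      choose P hP hx using hex
      have h2 : ∑ k ∈ Finset.univ.sigma P, max (μ k.2) 0 ≤ posPart S μ (⋃ i, A i) := by
        refine sum_le_posPart hμ hv (Finset.univ.sigma P) (fun k => k.2) ?_ ?_ hU ?_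
        · rintro ⟨i, C⟩ hk
          exact (hP i).1 (by simpa using hk)
        · rintro ⟨i, C⟩ hk ⟨j, C'⟩ hl hne
          have hk : C ∈ P i := by simpa using hk
          have hl : C' ∈ P j := by simpa using hl
          by_cases hij : i = j
          · subst hij
            exact (hP i).2.1 hk hl (fun h => hne (by rw [h]))
          · refine (hd hij).mono ?_ ?_
            · rw [← (hP i).2.2]; exact subset_sUnion_of_mem hk
            · rw [← (hP j).2.2]; exact subset_sUnion_of_mem hl
        · have : ∀ i, A i = ⋃ C ∈ P i, C := fun i => by
            rw [← (hP i).2.2, sUnion_eq_biUnion]; rfl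
          ext x
          simp only [mem_iUnion, this]
          constructor
          · rintro ⟨⟨i, C⟩, hk, hx⟩
            exact ⟨i, C, by simpa using hk, hx⟩
          · rintro ⟨i, C, hC, hx⟩
            exact ⟨⟨i, C⟩, by simpa using hC, hx⟩
      rw [Finset.sum_sigma] at h2
      have h3 : ∑ i, (posPart S μ (A i) - ε / (n + 1)) ≤ ∑ i, ∑ C ∈ P i, max (μ C) 0 :=
        Finset.sum_le_sum fun i _ => (hx i).le
      rw [Finset.sum_sub_distrib] at h3
      have h4 : ∑ _i : Fin n, ε / ((n : ℝ) + 1) ≤ ε := by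
        rw [Finset.sum_const, Finset.card_univ, Fintype.card_fin, nsmul_eq_mul, ← mul_div_assoc,
          div_le_iff₀ (by positivity)]
        nlinarith
      linarith
  refine ⟨?_, hadd⟩
  have := hadd 0 (fun _ => ∅) (fun i => i.elim0) (fun i => i.elim0) (by simpa using hS.empty_mem)
  simpa using this

/-- Countable additivity passes to the positive part. For a partition `P` of the union, each
`C ∈ P` satisfies `μ C = ∑' n, μ (C ∩ A n) ≤ ∑' n, μ⁺ (C ∩ A n)`; summing over `P` and using
additivity of `μ⁺` on `A n` bounds the partition sum by `∑' n, μ⁺ (A n)`. -/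
lemma countablyAdditive_posPart {S : Set (Set Ω)} (hS : IsSetSemiring S) {μ : Set Ω → ℝ}
    (hμ : IsRealCharge S μ) (hv : FiniteVar S μ) (hc : CountablyAdditiveR S μ) :
    CountablyAdditiveR S (posPart S μ) := by
  intro A hA hd hU
  have hp := isRealCharge_posPart hS hμ hv
  have h0 : ∀ B ∈ S, 0 ≤ posPart S μ B := fun B hB => (le_max_right _ _).trans (le_posPart hv hB)
  have hsum : ∀ (D : ℕ → Set Ω) (B : Set Ω), (∀ n, D n ∈ S) →
      Pairwise (Function.onFun Disjoint D) → B ∈ S → (∀ n, D n ⊆ B) →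
      ∀ s : Finset ℕ, ∑ n ∈ s, posPart S μ (D n) ≤ posPart S μ B := fun D B hD hDd hB hDB s =>
    hp.sum_le hS h0 s D (fun n _ => hD n) (fun i _ j _ hij => hDd hij) hB (fun n _ => hDB n)
  have hsm : ∀ (D : ℕ → Set Ω) (B : Set Ω), (∀ n, D n ∈ S) →
      Pairwise (Function.onFun Disjoint D) → B ∈ S → (∀ n, D n ⊆ B) →
      Summable fun n => posPart S μ (D n) := fun D B hD hDd hB hDB =>
    summable_of_sum_le (fun n => h0 _ (hD n)) (hsum D B hD hDd hB hDB)
  have hsA := hsm A _ hA hd hU (subset_iUnion A)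
  suffices posPart S μ (⋃ n, A n) = ∑' n, posPart S μ (A n) by
    rw [this]; exact hsA.hasSum
  refine le_antisymm ?_ (hsA.tsum_le_of_sum_le (hsum A _ hA hd hU (subset_iUnion A)))
  refine (isLUB_posPart hv hU).2 ?_
  rintro x ⟨P, hP, rfl⟩
  have hPA : ∀ n, posPart S μ (A n) = ∑ C ∈ P, posPart S μ (C ∩ A n) := by
    intro n
    rw [← hp.sum_inter hS P id (fun C hC => hP.1 hC) hP.2.1 (hA n)
      (by
        have : (⋃ C ∈ P, id C) = ⋃ i, A i := by rw [← hP.2.2, sUnion_eq_biUnion]; rfl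
        rw [this]; exact subset_iUnion A n)]
    exact Finset.sum_congr rfl fun C _ => by rw [inter_comm]; rfl
  have hCS : ∀ C ∈ P, ∀ n, C ∩ A n ∈ S := fun C hC n => hS.inter_mem _ (hP.1 hC) _ (hA n)
  have hCd : ∀ C : Set Ω, Pairwise (Function.onFun Disjoint fun n => C ∩ A n) :=
    fun C i j hij => (hd hij).mono inter_subset_right inter_subset_right
  have hCsm : ∀ C ∈ P, Summable fun n => posPart S μ (C ∩ A n) := fun C hC =>
    hsm _ C (hCS C hC) (hCd C) (hP.1 hC) (fun n => inter_subset_left)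
  rw [tsum_congr hPA, Summable.tsum_finsetSum hCsm]
  refine Finset.sum_le_sum fun C hC => max_le ?_ (tsum_nonneg fun n => h0 _ (hCS C hC n))
  have hCU : (⋃ n, C ∩ A n) = C := by
    rw [← inter_iUnion]
    refine inter_eq_left.2 ?_
    rw [← hP.2.2]; exact subset_sUnion_of_mem hC
  have h := hc (fun n => C ∩ A n) (hCS C hC) (hCd C) (by rw [hCU]; exact hP.1 hC)
  rw [hCU] at h
  exact hasSum_le (fun n => (le_max_left _ _).trans (le_posPart hv (hCS C hC n))) h
    (hCsm C hC).hasSum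

/-- Jordan decomposition for a finite-variation signed charge on a semi-ring:
there exist unique finite nonnegative charges `p = μ⁺`, `q = μ⁻` with `μ = p - q` and
`p ∧ q = 0`; moreover `|μ| = p + q`, and if `μ` is countably additive then so are `p, q`. -/
theorem statement10 {Ω : Type*} (S : Set (Set Ω)) (hS : MeasureTheory.IsSetSemiring S)
    (μ : Set Ω → ℝ) (hμ : IsRealCharge S μ) (hv : FiniteVar S μ) :
    ∃ p q : Set Ω → ℝ,
      IsRealCharge S p ∧ (∀ A ∈ S, 0 ≤ p A) ∧
      IsRealCharge S q ∧ (∀ A ∈ S, 0 ≤ q A) ∧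
      (∀ A ∈ S, μ A = p A - q A) ∧
      (∀ A ∈ S, infC S (toE p) (toE q) A = 0) ∧
      (∀ A ∈ S, (p A : EReal) = pos S (toE μ) A) ∧
      (∀ A ∈ S, (q A : EReal) = neg S (toE μ) A) ∧
      (∀ A ∈ S, var S (toE μ) A = ((p A + q A : ℝ) : EReal)) ∧
      (CountablyAdditiveR S μ → CountablyAdditiveR S p ∧ CountablyAdditiveR S q) ∧
      (∀ p' q' : Set Ω → ℝ,
        IsRealCharge S p' → (∀ A ∈ S, 0 ≤ p' A) →
        IsRealCharge S q' → (∀ A ∈ S, 0 ≤ q' A) →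
        (∀ A ∈ S, μ A = p' A - q' A) →
        (∀ A ∈ S, infC S (toE p') (toE q') A = 0) →
        ∀ A ∈ S, p' A = p A ∧ q' A = q A) := by
  have hp := isRealCharge_posPart hS hμ hv
  have hq : IsRealCharge S (fun A => posPart S μ A - μ A) :=
    ⟨by simp [hp.empty, hμ.empty], fun n A hA hd hU => by
      simp only [hp.additive n A hA hd hU, hμ.additive n A hA hd hU, Finset.sum_sub_distrib]⟩
  have hzero : IsRealCharge S (fun _ : Set Ω => (0 : ℝ)) := ⟨rfl, fun n A _ _ _ => by simp⟩
  have hneg : IsRealCharge S (fun A => -μ A) :=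
    ⟨by simp [hμ.empty], fun n A hA hd hU => by
      simp only [hμ.additive n A hA hd hU, Finset.sum_neg_distrib]⟩
  -- If `μ = p - q` then `min p q = p - max μ 0`, hence `p ∧ q = p - μ⁺`.
  have hinf : ∀ p q : Set Ω → ℝ, IsRealCharge S p → (∀ A ∈ S, μ A = p A - q A) →
      ∀ A ∈ S, infC S (toE p) (toE q) A = ((p A - posPart S μ A : ℝ) : EReal) := by
    intro p q hp' hpq A hA
    refine iInf_partition_eq hv hp' (fun C hC => ?_) hA
    rw [toE, toE, ← EReal.coe_strictMono.monotone.map_min, hpq C hC]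
    congr 1
    rcases le_total (p C) (q C) with h | h
    · rw [min_eq_left h, max_eq_right (by linarith)]; ring
    · rw [min_eq_right h, max_eq_left (by linarith)]; ring
  refine ⟨posPart S μ, fun A => posPart S μ A - μ A, hp,
    fun A hA => (le_max_right _ _).trans (le_posPart hv hA), hq,
    fun A hA => sub_nonneg.2 ((le_max_left _ _).trans (le_posPart hv hA)),
    fun A _ => by ring, ?_, ?_, ?_, ?_, ?_, ?_⟩
  · intro A hA
    rw [hinf _ _ hp (fun A _ => by ring) A hA]; simp
  · intro A hA
    rw [pos, iSup_partition_eq hv hzero one_pos (fun C => ?_) hA]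
    · simp
    · rw [toE, one_mul, add_zero, EReal.coe_strictMono.monotone.map_max]; rfl
  · intro A hA
    rw [neg, iSup_partition_eq hv hneg one_pos (fun C => ?_) hA]
    · simp only [one_mul, sub_eq_add_neg]
    · rw [toE, one_mul, ← EReal.coe_neg, ← EReal.coe_zero,
        ← EReal.coe_strictMono.monotone.map_max]
      congr 1
      rcases le_total (μ C) 0 with h | h
      · rw [max_eq_left (by linarith), max_eq_right h]; ring
      · rw [max_eq_right (by linarith), max_eq_left h]; ring
  · intro A hA
    rw [var, iSup_partition_eq hv hneg two_pos (fun C => ?_) hA]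
    · congr 1; ring
    · rw [toE, ← EReal.coe_neg, ← EReal.coe_strictMono.monotone.map_max]
      congr 1
      rcases le_total (μ C) 0 with h | h
      · rw [max_eq_right (by linarith), max_eq_right h]; ring
      · rw [max_eq_left (by linarith), max_eq_left h]; ring
  · intro hc
    have hcp := countablyAdditive_posPart hS hμ hv hc
    exact ⟨hcp, fun A hA hd hU => (hcp A hA hd hU).sub (hc A hA hd hU)⟩
  · intro p' q' hp' _ _ _ hpq h0 A hA
    have h := hinf p' q' hp' hpq A hA
    rw [h0 A hA, ← EReal.coe_zero, EReal.coe_eq_coe_iff] at h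
    have h1 := hpq A hA
    constructor <;> linarith

end SignedCharges
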